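/- Let ν be a σ-invariant Gibbs measure for a d-Hölder continuous φ : Σ_A → ℝ with pressure P (i.e. ν is the unique equilibrium measure of φ). Then h := P − ∫_{Σ_A} φ dν > 0 (h equals the measure-theoretic entropy h_ν(σ) by the variational principle), and for every x ∈ Σ_A^* ∪ {∅}, defining Ξ_x(t) := Σ ν([y]) where the sum runs over all y ∈ Σ_A^* with [y] ⊆ [x] and ν([y]) > t, one has Ξ_x(e^{−r}) ∼ ν([x]) r / h as r → ∞, i.e. lim_{r→∞} Ξ_x(e^{−r}) / r = ν([x]) / h. -/

import Mathlib

open MeasureTheory Filter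
open scoped ENNReal NNReal

namespace SFT

variable {l : ℕ}

/-- The one-sided subshift of finite type determined by the `l × l` matrix `A`:
infinite sequences with transitions allowed by `A`. -/
abbrev SigmaA (l : ℕ) (A : Matrix (Fin l) (Fin l) ℕ) : Type :=
  {ω : ℕ → Fin l // ∀ k, A (ω k) (ω (k + 1)) = 1}

/-- The left shift `σ` on `SigmaA l A`. -/
def shift {A : Matrix (Fin l) (Fin l) ℕ} (ω : SigmaA l A) : SigmaA l A :=
  ⟨fun n => ω.1 (n + 1), fun k => ω.2 (k + 1)⟩

/-- Birkhoff sums `S_k φ = ∑_{m<k} φ ∘ σ^m`. -/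
def birkhoff {A : Matrix (Fin l) (Fin l) ℕ} (φ : SigmaA l A → ℝ) (k : ℕ) (ω : SigmaA l A) : ℝ :=
  ∑ m ∈ Finset.range k, φ (shift^[m] ω)

/-- The matrix `A` has `0`-`1` entries and is irreducible and aperiodic
(some power of `A` has all entries strictly positive). -/
def Primitive (A : Matrix (Fin l) (Fin l) ℕ) : Prop :=
  (∀ i j, A i j = 0 ∨ A i j = 1) ∧ ∃ n : ℕ, 0 < n ∧ ∀ i j, 0 < (A ^ n) i j

/-- A finite word is admissible, i.e. belongs to `Σ_A^*`. -/
def Admissible (A : Matrix (Fin l) (Fin l) ℕ) (x : List (Fin l)) : Prop :=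
  x ≠ [] ∧ ∀ (i : ℕ) (h : i + 1 < x.length), A (x[i]'(by omega)) (x[i + 1]'h) = 1

/-- The cylinder set `[x]` of a finite word (the empty word gives all of `Σ_A`). -/
def cylinder (A : Matrix (Fin l) (Fin l) ℕ) (x : List (Fin l)) : Set (SigmaA l A) :=
  {ω | ∀ (i : ℕ) (h : i < x.length), ω.1 i = x[i]'h}

/-- The initial word `(ω_1, …, ω_k)` of `ω`. -/
def wordPrefix {A : Matrix (Fin l) (Fin l) ℕ} (ω : SigmaA l A) (k : ℕ) : List (Fin l) :=
  List.ofFn (fun i : Fin k => ω.1 i)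

/-- `μ` is a Gibbs measure for the potential `φ` with pressure `P`:
`c⁻¹ ≤ μ([ω_1,…,ω_k]) / exp(S_kφ(ω) − kP) ≤ c` for some `c > 1`. -/
def IsGibbs {A : Matrix (Fin l) (Fin l) ℕ} (φ : SigmaA l A → ℝ) (P : ℝ)
    (μ : Measure (SigmaA l A)) : Prop :=
  ∃ c : ℝ, 1 < c ∧ ∀ (ω : SigmaA l A) (k : ℕ), 0 < k →
    c⁻¹ ≤ (μ (cylinder A (wordPrefix ω k))).toReal / Real.exp (birkhoff φ k ω - k * P) ∧
      (μ (cylinder A (wordPrefix ω k))).toReal / Real.exp (birkhoff φ k ω - k * P) ≤ c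

/-- `φ` is Hölder continuous with respect to the metric `d(ω,υ) = 2^{-(ω ∧ υ)}`:
there are `C` and an exponent `s > 0` with `|φ(ω) − φ(υ)| ≤ C ⬝ d(ω,υ)^s`, i.e.
`|φ(ω) − φ(υ)| ≤ C ⬝ 2^{-sn}` whenever `ω` and `υ` agree in their first `n` coordinates. -/
def HolderCont {A : Matrix (Fin l) (Fin l) ℕ} (φ : SigmaA l A → ℝ) : Prop :=
  ∃ C s : ℝ, 0 < s ∧ ∀ (ω υ : SigmaA l A) (n : ℕ),
    (∀ i < n, ω.1 i = υ.1 i) → |φ ω - φ υ| ≤ C * (2 : ℝ) ^ (-(s * n))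

/-- `Ξ_x(t)`: the total `ν`-measure of the cylinders `[y] ⊆ [x]`, `y ∈ Σ_A^*`,
with `ν([y]) > t`. -/
noncomputable def xiSum (A : Matrix (Fin l) (Fin l) ℕ) (ν : Measure (SigmaA l A))
    (x : List (Fin l)) (t : ℝ) : ℝ :=
  ∑' y : List (Fin l),
    Set.indicator
      {y | Admissible A y ∧ cylinder A y ⊆ cylinder A x ∧ t < (ν (cylinder A y)).toReal}
      (fun y => (ν (cylinder A y)).toReal) y

end SFT

section Ergodic

variable {α : Type*} [MeasurableSpace α] {μ : Measure α} {T : α → α} {f : α → ℝ}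

theorem birkhoffAverage_koopman_toLp (hT : MeasurePreserving T μ μ) (hf : MemLp f 2 μ) (N : ℕ) :
    ⇑(birkhoffAverage ℝ (Lp.compMeasurePreservingₗᵢ (p := 2) (E := ℝ) ℝ T hT)
      _root_.id N (hf.toLp f)) =ᵐ[μ] birkhoffAverage ℝ T f N := by
  have iter : ∀ n, (Lp.compMeasurePreservingₗᵢ (p := 2) (E := ℝ) ℝ T hT)^[n] (hf.toLp f)
      =ᵐ[μ] f ∘ T^[n] := by
    intro n
    have : (Lp.compMeasurePreservingₗᵢ (p := 2) (E := ℝ) ℝ T hT)^[n] (hf.toLp f) =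
        (hf.comp_measurePreserving (hT.iterate n)).toLp _ := by
      induction n with
      | zero => rfl
      | succ n ih =>
        rw [Function.iterate_succ_apply', ih]
        rfl
    rw [this]
    exact MemLp.coeFn_toLp _
  have hsum : ⇑(birkhoffSum (Lp.compMeasurePreservingₗᵢ (p := 2) (E := ℝ) ℝ T hT)
      _root_.id N (hf.toLp f)) =ᵐ[μ] birkhoffSum T f N := by
    induction N with
    | zero =>
      rw [birkhoffSum_zero, birkhoffSum_zero']
      exact Lp.coeFn_zero _ _ _
    | succ N ih =>
      rw [birkhoffSum_succ]
      filter_upwards [Lp.coeFn_add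
        (birkhoffSum (Lp.compMeasurePreservingₗᵢ (p := 2) (E := ℝ) ℝ T hT)
        _root_.id N (hf.toLp f)) ((Lp.compMeasurePreservingₗᵢ (p := 2) (E := ℝ) ℝ T hT)^[N]
          (hf.toLp f)), ih, iter N] with x h1 h2 h3
      rw [birkhoffSum_succ]
      simp only [_root_.id]
      rw [h1, Pi.add_apply, h2, h3, Function.comp_apply]
  filter_upwards [Lp.coeFn_smul (N : ℝ)⁻¹ (birkhoffSum
    (Lp.compMeasurePreservingₗᵢ (p := 2) (E := ℝ) ℝ T hT) _root_.id N (hf.toLp f)), hsum]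
    with x h1 h2
  rw [birkhoffAverage, birkhoffAverage, h1, Pi.smul_apply, h2]

theorem integral_birkhoffAverage (hT : MeasurePreserving T μ μ) (hf : Integrable f μ)
    {N : ℕ} (hN : N ≠ 0) : ∫ x, birkhoffAverage ℝ T f N x ∂μ = ∫ x, f x ∂μ := by
  have h1 : ∀ n, Integrable (fun x => f (T^[n] x)) μ := fun n =>
    (hT.iterate n).integrable_comp_of_integrable hf
  have h2 : ∀ n, ∫ x, f (T^[n] x) ∂μ = ∫ x, f x ∂μ := fun n => by
    have := integral_map (hT.iterate n).measurable.aemeasurable (f := f)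
      (by rw [(hT.iterate n).map_eq]; exact hf.aestronglyMeasurable)
    rw [(hT.iterate n).map_eq] at this
    exact this.symm
  simp only [birkhoffAverage, birkhoffSum, smul_eq_mul]
  rw [integral_const_mul, integral_finsetSum _ fun n _ => h1 n]
  simp [h2, hN]

theorem Ergodic.tendstoInMeasure_birkhoffAverage [IsProbabilityMeasure μ] (hT : Ergodic T μ)
    (hf : MemLp f 2 μ) :
    TendstoInMeasure μ (fun N => birkhoffAverage ℝ T f N) atTop (fun _ => ∫ x, f x ∂μ) := by
  set U := Lp.compMeasurePreservingₗᵢ (p := 2) (E := ℝ) ℝ T hT.toMeasurePreserving with hU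
  set g : Lp ℝ 2 μ := ((U.toContinuousLinearMap.eqLocus
    (1 : Lp ℝ 2 μ →L[ℝ] Lp ℝ 2 μ)).orthogonalProjectionOnto (hf.toLp f) : Lp ℝ 2 μ) with hg
  have hlim : Tendsto (birkhoffAverage ℝ U _root_.id · (hf.toLp f)) atTop (nhds g) :=
    U.toContinuousLinearMap.tendsto_birkhoffAverage_orthogonalProjection
      U.norm_toContinuousLinearMap_le (hf.toLp f)
  have hUg : U g = g := ((U.toContinuousLinearMap.eqLocus
    (1 : Lp ℝ 2 μ →L[ℝ] Lp ℝ 2 μ)).orthogonalProjectionOnto (hf.toLp f)).2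
  obtain ⟨c, hc⟩ := hT.ae_eq_const_of_ae_eq_comp_ae (Lp.aestronglyMeasurable g) (by
    have := Lp.coeFn_compMeasurePreserving g hT.toMeasurePreserving
    have h2 : Lp.compMeasurePreserving T hT.toMeasurePreserving g = g := hUg
    rw [h2] at this
    exact this.symm)
  have hL2 := (Lp.tendsto_Lp_iff_tendsto_eLpNorm' _ _).mp hlim
  have hcongr : ∀ N, eLpNorm (⇑(birkhoffAverage ℝ U _root_.id N (hf.toLp f)) - ⇑g) 2 μ =
      eLpNorm (birkhoffAverage ℝ T f N - fun _ => c) 2 μ := fun N =>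
    eLpNorm_congr_ae ((birkhoffAverage_koopman_toLp hT.toMeasurePreserving hf N).sub hc)
  simp only [hcongr] at hL2
  have hmem : ∀ N, MemLp (birkhoffAverage ℝ T f N) 2 μ := fun N =>
    (memLp_congr_ae (birkhoffAverage_koopman_toLp hT.toMeasurePreserving hf N)).1 (Lp.memLp _)
  have hL1 : Tendsto (fun N => eLpNorm (birkhoffAverage ℝ T f N - fun _ => c) 1 μ) atTop
      (nhds 0) :=
    tendsto_of_tendsto_of_tendsto_of_le_of_le tendsto_const_nhds hL2 (fun _ => zero_le)
      fun N => eLpNorm_le_eLpNorm_of_exponent_le (by norm_num)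
        ((hmem N).1.sub aestronglyMeasurable_const)
  have hint := tendsto_integral_of_L1' (fun _ : α => c) aestronglyMeasurable_const
    (Eventually.of_forall fun N => (hmem N).integrable (by norm_num)) hL1
  have hint' : Tendsto (fun N : ℕ => ∫ x, birkhoffAverage ℝ T f N x ∂μ) atTop
      (nhds (∫ x, f x ∂μ)) := by
    refine tendsto_const_nhds.congr' ?_
    filter_upwards [eventually_ne_atTop 0] with N hN
    exact (integral_birkhoffAverage hT.toMeasurePreserving (hf.integrable (by norm_num)) hN).symm
  have hceq : c = ∫ x, f x ∂μ := by simpa using tendsto_nhds_unique hint hint'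
  rw [← hceq]
  exact tendstoInMeasure_of_tendsto_eLpNorm (by norm_num) (fun N => (hmem N).1)
    aestronglyMeasurable_const hL2

end Ergodic

namespace SFT

variable {l : ℕ}

section Symbolic

variable {A : Matrix (Fin l) (Fin l) ℕ}

theorem iterate_shift_apply (ω : SigmaA l A) (n i : ℕ) : (shift^[n] ω).1 i = ω.1 (i + n) := by
  induction n generalizing i with
  | zero => rfl
  | succ n ih =>
    rw [Function.iterate_succ_apply']
    exact (ih (i + 1)).trans (congrArg ω.1 (by omega))

theorem mem_cylinder_wordPrefix {ω υ : SigmaA l A} {k : ℕ} :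
    υ ∈ cylinder A (wordPrefix ω k) ↔ ∀ i < k, υ.1 i = ω.1 i := by
  simp [cylinder, wordPrefix]

theorem mem_cylinder_wordPrefix_self (ω : SigmaA l A) (k : ℕ) :
    ω ∈ cylinder A (wordPrefix ω k) :=
  mem_cylinder_wordPrefix.2 fun _ _ => rfl

theorem wordPrefix_congr {ω υ : SigmaA l A} {k : ℕ} (h : ∀ i < k, υ.1 i = ω.1 i) :
    wordPrefix υ k = wordPrefix ω k := by
  unfold wordPrefix
  congr 1
  funext i
  exact h i i.2

theorem cylinder_wordPrefix_antitone (ω : SigmaA l A) :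
    Antitone fun k => cylinder A (wordPrefix ω k) := fun _ _ hab _ hυ =>
  mem_cylinder_wordPrefix.2 fun i hi => mem_cylinder_wordPrefix.1 hυ i (hi.trans_le hab)

theorem isOpen_cylinder (x : List (Fin l)) : IsOpen (cylinder A x) := by
  have : cylinder A x = ⋂ i : Fin x.length, {ω : SigmaA l A | ω.1 i = x[i]} := by
    ext ω
    simp [cylinder, Fin.forall_iff]
  rw [this]
  refine isOpen_iInter_of_finite fun i => ?_
  have hc : Continuous fun ω : SigmaA l A => ω.1 i :=
    (continuous_apply (i : ℕ)).comp continuous_subtype_val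
  exact (isOpen_discrete ({x[i]} : Set (Fin l))).preimage hc

theorem measurableSet_cylinder (x : List (Fin l)) : MeasurableSet (cylinder A x) :=
  (isOpen_cylinder x).measurableSet

theorem continuous_shift : Continuous (shift : SigmaA l A → SigmaA l A) := by
  refine Continuous.subtype_mk (continuous_pi fun n => ?_) _
  exact (continuous_apply (n + 1)).comp continuous_subtype_val

/-- Every neighbourhood of a point contains a cylinder around that point. -/
theorem exists_cylinder_subset {U : Set (SigmaA l A)} (hU : IsOpen U) {ω : SigmaA l A}
    (hω : ω ∈ U) : ∃ k, cylinder A (wordPrefix ω k) ⊆ U := by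
  obtain ⟨V, hV, rfl⟩ := isOpen_induced_iff.1 hU
  obtain ⟨I, u, hu, hsub⟩ := isOpen_pi_iff.1 hV ω.1 hω
  refine ⟨I.sup _root_.id + 1, fun υ hυ => hsub fun i hi => ?_⟩
  rw [mem_cylinder_wordPrefix.1 hυ i (Nat.lt_succ_of_le (Finset.le_sup (f := _root_.id) hi))]
  exact (hu i hi).2

theorem measure_setOf_restrict_fin_mem (μ : Measure (SigmaA l A)) (k : ℕ)
    (s : Finset (Fin k → Fin l)) :
    ∑ v ∈ s, μ (cylinder A (List.ofFn v)) =
      μ {ω | (fun i : Fin k => ω.1 i) ∈ s} := by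
  have h : ∀ v : Fin k → Fin l, cylinder A (List.ofFn v) =
      (fun (ω : SigmaA l A) (i : Fin k) => ω.1 i) ⁻¹' {v} := by
    intro v
    ext ω
    simp [cylinder, funext_iff, Fin.forall_iff]
  simp_rw [h]
  refine sum_measure_preimage_singleton s fun v _ => ?_
  rw [← h]
  exact measurableSet_cylinder _

/-- Domination of finite measures can be tested on cylinders. -/
theorem measure_le_of_forall_cylinder {μ₁ μ₂ : Measure (SigmaA l A)} [IsFiniteMeasure μ₁]
    (h : ∀ (ω : SigmaA l A) (k : ℕ), 0 < k →
      μ₂ (cylinder A (wordPrefix ω k)) ≤ μ₁ (cylinder A (wordPrefix ω k))) : μ₂ ≤ μ₁ := by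
  classical
  have hopen : ∀ U : Set (SigmaA l A), IsOpen U → μ₂ U ≤ μ₁ U := by
    intro U hU
    set V : ℕ → Set (SigmaA l A) := fun k => {ω | cylinder A (wordPrefix ω (k + 1)) ⊆ U} with hV
    have hmono : Monotone V := fun a b hab ω hω =>
      (cylinder_wordPrefix_antitone ω (Nat.succ_le_succ hab)).trans hω
    have hUV : U = ⋃ k, V k := by
      ext ω
      simp only [Set.mem_iUnion, hV, Set.mem_ofPred_eq]
      constructor
      · intro hω
        obtain ⟨k, hk⟩ := exists_cylinder_subset hU hω
        exact ⟨k, (cylinder_wordPrefix_antitone ω k.le_succ).trans hk⟩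
      · rintro ⟨k, hk⟩
        exact hk (mem_cylinder_wordPrefix_self ω _)
    have hk : ∀ k, μ₂ (V k) ≤ μ₁ (V k) := by
      intro k
      have hVk : V k = {ω | (fun i : Fin (k + 1) => ω.1 i) ∈
          Finset.univ.filter fun v : Fin (k + 1) → Fin l => cylinder A (List.ofFn v) ⊆ U} := by
        ext ω
        simp [hV, wordPrefix]
      rw [hVk, ← measure_setOf_restrict_fin_mem, ← measure_setOf_restrict_fin_mem]
      refine Finset.sum_le_sum fun v _ => ?_
      rcases (cylinder A (List.ofFn v)).eq_empty_or_nonempty with he | ⟨ω, hω⟩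
      · rw [he, measure_empty, measure_empty]
      · have : List.ofFn v = wordPrefix ω (k + 1) := by
          unfold wordPrefix
          congr 1
          funext i
          have := hω i (by simpa using i.is_le)
          rw [this, List.getElem_ofFn]
        rw [this]
        exact h ω (k + 1) k.succ_pos
    rw [hUV, hmono.measure_iUnion, hmono.measure_iUnion]
    exact iSup_mono hk
  have : SecondCountableTopology (SigmaA l A) := TopologicalSpace.Subtype.secondCountableTopology _
  have := TopologicalSpace.metrizableSpace_of_t3_secondCountable (SigmaA l A)
  refine Measure.le_iff.2 fun s _ => ?_
  rw [s.measure_eq_iInf_isOpen μ₁]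
  refine le_iInf fun U => le_iInf fun hsU => le_iInf fun hU => ?_
  exact (measure_mono hsU).trans (hopen U hU)

/-! ### Connecting words -/

theorem exists_iterate_shift_eq (hA : ∀ i j, A i j = 0 ∨ A i j = 1) (n : ℕ) {i : Fin l}
    {τ : SigmaA l A} (h : 0 < (A ^ n) i (τ.1 0)) :
    ∃ υ : SigmaA l A, υ.1 0 = i ∧ shift^[n] υ = τ := by
  induction n generalizing i with
  | zero =>
    refine ⟨τ, ?_, rfl⟩
    by_contra hne
    simp [Matrix.one_apply_ne (Ne.symm hne)] at h
  | succ n ih =>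
    rw [pow_succ', Matrix.mul_apply] at h
    obtain ⟨j, -, hj⟩ := Finset.exists_ne_zero_of_sum_ne_zero h.ne'
    obtain ⟨υ, hυ, hτ⟩ := ih (Nat.pos_of_ne_zero (right_ne_zero_of_mul hj))
    have hij : A i j = 1 := (hA i j).resolve_left (left_ne_zero_of_mul hj)
    refine ⟨⟨fun m => m.casesOn i fun m => υ.1 m, ?_⟩, rfl, ?_⟩
    · rintro (_ | m)
      · simpa [hυ] using hij
      · exact υ.2 m
    · rw [Function.iterate_succ_apply]
      exact hτ

theorem exists_splice (ω τ : SigmaA l A) (k : ℕ) (h : ω.1 k = τ.1 0) :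
    ∃ υ : SigmaA l A, (∀ i ≤ k, υ.1 i = ω.1 i) ∧ shift^[k] υ = τ := by
  refine ⟨⟨fun m => if m < k then ω.1 m else τ.1 (m - k), fun m => ?_⟩, fun i hi => ?_, ?_⟩
  · beta_reduce
    rcases lt_trichotomy (m + 1) k with hm | hm | hm
    · rw [if_pos (by omega), if_pos hm]
      exact ω.2 m
    · rw [if_pos (by omega), if_neg (by omega), hm, Nat.sub_self, ← h, ← hm]
      exact ω.2 m
    · rw [if_neg (by omega), if_neg (by omega), Nat.sub_add_comm (by omega : k ≤ m)]
      exact τ.2 (m - k)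
  · rcases hi.lt_or_eq with hi | rfl
    · exact if_pos hi
    · simp [h]
  · ext i
    rw [iterate_shift_apply]
    simp

theorem exists_connecting (hA : ∀ i j, A i j = 0 ∨ A i j = 1) {n : ℕ}
    (hn : ∀ i j, 0 < (A ^ n) i j) (ω τ : SigmaA l A) (k : ℕ) :
    ∃ υ : SigmaA l A, (∀ i ≤ k, υ.1 i = ω.1 i) ∧ shift^[k + n] υ = τ := by
  obtain ⟨υ, hυ, hτ⟩ := exists_iterate_shift_eq hA n (hn (ω.1 k) (τ.1 0))
  obtain ⟨ξ, hξ, hξ'⟩ := exists_splice ω υ k hυ.symm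
  exact ⟨ξ, hξ, by rw [add_comm, Function.iterate_add_apply, hξ', hτ]⟩

theorem exists_apply_zero_eq (hA : Primitive A) (b : Fin l) :
    ∃ τ : SigmaA l A, τ.1 0 = b := by
  obtain ⟨h01, n, hn, hpos⟩ := hA
  have hsucc : ∀ i, ∃ j, A i j = 1 := by
    intro i
    obtain ⟨m, rfl⟩ := Nat.exists_eq_succ_of_ne_zero hn.ne'
    have := hpos i i
    rw [pow_succ', Matrix.mul_apply] at this
    obtain ⟨j, -, hj⟩ := Finset.exists_ne_zero_of_sum_ne_zero this.ne'
    exact ⟨j, (h01 i j).resolve_left (left_ne_zero_of_mul hj)⟩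
  choose s hs using hsucc
  refine ⟨⟨fun k => s^[k] b, fun k => ?_⟩, rfl⟩
  beta_reduce
  rw [Function.iterate_succ_apply']
  exact hs _

/-! ### Hölder potentials -/

theorem HolderCont.continuous {φ : SigmaA l A → ℝ} (hφ : HolderCont φ) : Continuous φ := by
  obtain ⟨C, s, hs, h⟩ := hφ
  refine continuous_iff_continuousAt.2 fun ω => Metric.tendsto_nhds.2 fun ε hε => ?_
  have hlim : Tendsto (fun n : ℕ => C * (2 : ℝ) ^ (-(s * n))) atTop (nhds (C * 0)) := by
    refine Tendsto.const_mul C ?_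
    have : ∀ n : ℕ, (2 : ℝ) ^ (-(s * n)) = ((2 : ℝ) ^ (-s)) ^ n := fun n => by
      rw [← Real.rpow_natCast, ← Real.rpow_mul (by norm_num), neg_mul]
    simp_rw [this]
    exact tendsto_pow_atTop_nhds_zero_of_lt_one (by positivity)
      (Real.rpow_lt_one_of_one_lt_of_neg (by norm_num) (by linarith))
  rw [mul_zero] at hlim
  obtain ⟨n, hn⟩ := (hlim.eventually_lt_const hε).exists
  filter_upwards [(isOpen_cylinder (wordPrefix ω n)).mem_nhds (mem_cylinder_wordPrefix_self ω n)]
    with υ hυ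
  exact (h υ ω n (mem_cylinder_wordPrefix.1 hυ)).trans_lt hn

theorem HolderCont.exists_bound {φ : SigmaA l A → ℝ} (hφ : HolderCont φ) :
    ∃ M, 0 ≤ M ∧ ∀ ω, |φ ω| ≤ M := by
  obtain ⟨C, s, hs, h⟩ := hφ
  rcases isEmpty_or_nonempty (SigmaA l A) with he | ⟨⟨ω₀⟩⟩
  · exact ⟨0, le_rfl, fun ω => he.elim ω⟩
  · refine ⟨|φ ω₀| + |C|, by positivity, fun ω => ?_⟩
    have h1 := h ω ω₀ 0 (by simp)
    simp only [Nat.cast_zero, mul_zero, neg_zero, Real.rpow_zero, mul_one] at h1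
    have h2 : |φ ω| ≤ |φ ω - φ ω₀| + |φ ω₀| := by
      simpa using abs_add_le (φ ω - φ ω₀) (φ ω₀)
    have h3 := le_abs_self C
    linarith

/-! ### Consequences of the Gibbs property -/

section Gibbs

variable {φ : SigmaA l A → ℝ} {P : ℝ} {ν : Measure (SigmaA l A)}

theorem birkhoff_add (m k : ℕ) (ω : SigmaA l A) :
    birkhoff φ (m + k) ω = birkhoff φ m ω + birkhoff φ k (shift^[m] ω) :=
  birkhoffSum_add shift φ m k ω

theorem neg_mul_le_birkhoff {M : ℝ} (hM : ∀ ω, |φ ω| ≤ M) (k : ℕ) (ω : SigmaA l A) :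
    -(k * M) ≤ birkhoff φ k ω := by
  have := Finset.card_nsmul_le_sum (Finset.range k) (fun m => φ (shift^[m] ω)) (-M)
    fun m _ => (abs_le.1 (hM _)).1
  simpa [birkhoff] using this

theorem IsGibbs.exists_bounds [IsProbabilityMeasure ν] (h : IsGibbs φ P ν) :
    ∃ D : ℝ, 0 < D ∧ ∀ (ω : SigmaA l A) (k : ℕ),
      Real.exp (birkhoff φ k ω - k * P - D) ≤ ν.real (cylinder A (wordPrefix ω k)) ∧
      ν.real (cylinder A (wordPrefix ω k)) ≤ Real.exp (birkhoff φ k ω - k * P + D) := by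
  obtain ⟨c, hc, h⟩ := h
  have hD : 0 < Real.log c := Real.log_pos hc
  refine ⟨Real.log c, hD, fun ω k => ?_⟩
  rcases Nat.eq_zero_or_pos k with rfl | hk
  · have h0 : cylinder A (wordPrefix ω 0) = Set.univ :=
      Set.eq_univ_of_forall fun υ => mem_cylinder_wordPrefix.2 fun i hi => absurd hi i.not_lt_zero
    simp only [h0, birkhoff, Finset.range_zero, Finset.sum_empty, Nat.cast_zero, zero_mul,
      sub_zero, zero_add, zero_sub, probReal_univ, Real.one_le_exp_iff, Real.exp_le_one_iff]
    constructor <;> linarith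
  · obtain ⟨h1, h2⟩ := h ω k hk
    have hc0 : 0 < c := by linarith
    rw [le_div_iff₀ (Real.exp_pos _)] at h1
    rw [div_le_iff₀ (Real.exp_pos _)] at h2
    rw [Real.exp_sub _ (Real.log c), Real.exp_add _ (Real.log c), Real.exp_log hc0,
      div_eq_inv_mul, mul_comm _ c]
    exact ⟨h1, h2⟩

theorem exists_quasiBernoulli [IsProbabilityMeasure ν] (hA : Primitive A) (hφ : HolderCont φ)
    (hGibbs : IsGibbs φ P ν) :
    ∃ (n : ℕ) (κ : ℝ), 0 < n ∧ 0 < κ ∧ ∀ (ω τ : SigmaA l A) (k q : ℕ),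
      ∃ υ : SigmaA l A, (∀ i ≤ k, υ.1 i = ω.1 i) ∧ shift^[k + n] υ = τ ∧
        κ * (ν.real (cylinder A (wordPrefix ω (k + 1))) * ν.real (cylinder A (wordPrefix τ q))) ≤
          ν.real (cylinder A (wordPrefix υ (k + n + q))) := by
  obtain ⟨h01, n, hn, hpos⟩ := hA
  obtain ⟨D, hD, hG⟩ := hGibbs.exists_bounds
  obtain ⟨M, hM0, hM⟩ := hφ.exists_bound
  obtain ⟨m, rfl⟩ := Nat.exists_eq_succ_of_ne_zero hn.ne'
  refine ⟨m + 1, Real.exp (-(m * M) - m * P - 3 * D), hn, Real.exp_pos _, fun ω τ k q => ?_⟩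
  obtain ⟨υ, hυ, hτ⟩ := exists_connecting h01 hpos ω τ k
  refine ⟨υ, hυ, hτ, ?_⟩
  have hω : wordPrefix ω (k + 1) = wordPrefix υ (k + 1) :=
    wordPrefix_congr fun i hi => (hυ i (Nat.lt_succ_iff.1 hi)).symm
  have hsum : birkhoff φ (k + (m + 1) + q) υ = birkhoff φ (k + 1) υ +
      birkhoff φ m (shift^[k + 1] υ) + birkhoff φ q τ := by
    rw [birkhoff_add, hτ, show k + (m + 1) = k + 1 + m by ring, birkhoff_add]
  have hmid := neg_mul_le_birkhoff hM m (shift^[k + 1] υ)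
  rw [hω]
  calc _ ≤ Real.exp (-(m * M) - m * P - 3 * D) *
        (Real.exp (birkhoff φ (k + 1) υ - (k + 1 : ℕ) * P + D) *
          Real.exp (birkhoff φ q τ - q * P + D)) := by
        gcongr
        · exact (hG υ (k + 1)).2
        · exact (hG τ q).2
    _ ≤ Real.exp (birkhoff φ (k + (m + 1) + q) υ - (k + (m + 1) + q : ℕ) * P - D) := by
        rw [← Real.exp_add, ← Real.exp_add, Real.exp_le_exp, hsum]
        push_cast
        linarith
    _ ≤ _ := (hG υ _).1

theorem measure_cylinder_inter_preimage_ge [IsProbabilityMeasure ν] (hA : Primitive A)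
    (hφ : HolderCont φ) (hGibbs : IsGibbs φ P ν) :
    ∃ (n : ℕ) (κ : ℝ≥0∞), κ ≠ 0 ∧ κ ≠ ∞ ∧ ∀ (ω : SigmaA l A) (k : ℕ) (B : Set (SigmaA l A)),
      MeasurableSet B → κ * ν (cylinder A (wordPrefix ω (k + 1))) * ν B ≤
        ν (cylinder A (wordPrefix ω (k + 1)) ∩ shift^[k + n] ⁻¹' B) := by
  obtain ⟨n, κ, hn, hκ, h⟩ := exists_quasiBernoulli hA hφ hGibbs
  refine ⟨n, ENNReal.ofReal κ, by simpa using hκ, ENNReal.ofReal_ne_top, fun ω k B hB => ?_⟩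
  have hmeas : Measurable (shift^[k + n] : SigmaA l A → SigmaA l A) :=
    continuous_shift.measurable.iterate _
  have hC := measurableSet_cylinder (A := A) (wordPrefix ω (k + 1))
  have key : (ENNReal.ofReal κ * ν (cylinder A (wordPrefix ω (k + 1)))) • ν ≤
      (ν.restrict (cylinder A (wordPrefix ω (k + 1)))).map shift^[k + n] := by
    refine measure_le_of_forall_cylinder fun τ q _ => ?_
    obtain ⟨υ, hυ, hτ, hle⟩ := h ω τ k q
    rw [Measure.map_apply hmeas (measurableSet_cylinder _),
      Measure.restrict_apply (hmeas (measurableSet_cylinder _)), Measure.smul_apply, smul_eq_mul]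
    have hsub : cylinder A (wordPrefix υ (k + n + q)) ⊆
        shift^[k + n] ⁻¹' cylinder A (wordPrefix τ q) ∩ cylinder A (wordPrefix ω (k + 1)) := by
      intro ξ hξ
      rw [mem_cylinder_wordPrefix] at hξ
      refine ⟨mem_cylinder_wordPrefix.2 fun i hi => ?_, mem_cylinder_wordPrefix.2 fun i hi => ?_⟩
      · rw [← hτ, iterate_shift_apply, iterate_shift_apply]
        exact hξ _ (by omega)
      · rw [hξ i (by omega), hυ i (by omega)]
    refine le_trans ?_ (measure_mono hsub)
    rw [← ofReal_measureReal (μ := ν) (s := cylinder A (wordPrefix υ (k + n + q))),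
      ← ofReal_measureReal (μ := ν) (s := cylinder A (wordPrefix ω (k + 1))),
      ← ofReal_measureReal (μ := ν) (s := cylinder A (wordPrefix τ q)),
      ← ENNReal.ofReal_mul hκ.le, ← ENNReal.ofReal_mul (by positivity), mul_assoc]
    exact ENNReal.ofReal_le_ofReal hle
  have := key B
  rwa [Measure.map_apply hmeas hB, Measure.restrict_apply (hmeas hB), Measure.smul_apply,
    smul_eq_mul, Set.inter_comm] at this

theorem ergodic_shift [IsProbabilityMeasure ν] (hA : Primitive A)
    (hφ : HolderCont φ) (hGibbs : IsGibbs φ P ν)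
    (hinv : ∀ B : Set (SigmaA l A), MeasurableSet B → ν (shift ⁻¹' B) = ν B) :
    Ergodic (shift : SigmaA l A → SigmaA l A) ν := by
  have hmp : MeasurePreserving (shift : SigmaA l A → SigmaA l A) ν ν :=
    ⟨continuous_shift.measurable, Measure.ext fun B hB => by
      rw [Measure.map_apply continuous_shift.measurable hB, hinv B hB]⟩
  refine ⟨hmp, ⟨fun B hB hBinv => ?_⟩⟩
  obtain ⟨n, κ, hκ, hκt, h⟩ := measure_cylinder_inter_preimage_ge hA hφ hGibbs
  have hle : (κ * ν B) • ν ≤ ν.restrict B := by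
    refine measure_le_of_forall_cylinder fun ω k hk => ?_
    obtain ⟨k, rfl⟩ := Nat.exists_eq_succ_of_ne_zero hk.ne'
    have hiter : shift^[k + n] ⁻¹' B = B := by
      rw [Set.preimage_iterate_eq]
      exact Function.iterate_fixed hBinv _
    have := h ω k B hB
    rw [hiter] at this
    rw [Measure.smul_apply, smul_eq_mul, Measure.restrict_apply (measurableSet_cylinder _),
      mul_right_comm]
    exact this
  have h0 := hle Bᶜ
  rw [Measure.restrict_apply hB.compl, Set.compl_inter_self, measure_empty, Measure.smul_apply,
    smul_eq_mul, nonpos_iff_eq_zero, mul_eq_zero, mul_eq_zero, or_assoc] at h0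
  rw [Filter.eventuallyConst_set]
  rcases h0 with h0 | h0 | h0
  · exact absurd h0 hκ
  · exact Or.inr (measure_eq_zero_iff_ae_notMem.1 h0)
  · exact Or.inl (by simpa [mem_ae_iff] using h0)

theorem exists_cylinder_contraction [IsProbabilityMeasure ν] (hl : 2 ≤ l) (hA : Primitive A)
    (hφ : HolderCont φ) (hGibbs : IsGibbs φ P ν) :
    ∃ (n : ℕ) (δ : ℝ), 0 < n ∧ 0 < δ ∧ ∀ (ω : SigmaA l A) (k : ℕ),
      ν.real (cylinder A (wordPrefix ω (k + 1 + n))) ≤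
        (1 - δ) * ν.real (cylinder A (wordPrefix ω (k + 1))) := by
  obtain ⟨n, κ, hn, hκ, h⟩ := exists_quasiBernoulli hA hφ hGibbs
  obtain ⟨D, hD, hG⟩ := hGibbs.exists_bounds
  obtain ⟨M, hM0, hM⟩ := hφ.exists_bound
  refine ⟨n, κ * Real.exp (-M - P - D), hn, by positivity, fun ω k => ?_⟩
  have : Nontrivial (Fin l) := Fin.nontrivial_iff_two_le.2 hl
  obtain ⟨b, hb⟩ := exists_ne (ω.1 (k + n))
  obtain ⟨τ, rfl⟩ := exists_apply_zero_eq hA b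
  obtain ⟨υ, hυ, hτ, hle⟩ := h ω τ k 1
  have hτ1 : Real.exp (-M - P - D) ≤ ν.real (cylinder A (wordPrefix τ 1)) := by
    refine le_trans (Real.exp_le_exp.2 ?_) (hG τ 1).1
    have := neg_mul_le_birkhoff hM 1 τ
    push_cast at this ⊢
    linarith
  have hdisj : Disjoint (cylinder A (wordPrefix ω (k + n + 1)))
      (cylinder A (wordPrefix υ (k + n + 1))) := by
    refine Set.disjoint_left.2 fun ξ h1 h2 => hb ?_
    have e1 := mem_cylinder_wordPrefix.1 h1 (k + n) (by omega)
    have e2 := mem_cylinder_wordPrefix.1 h2 (k + n) (by omega)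
    rw [← e1, e2, ← hτ, iterate_shift_apply, zero_add]
  have hsub : cylinder A (wordPrefix ω (k + n + 1)) ∪ cylinder A (wordPrefix υ (k + n + 1)) ⊆
      cylinder A (wordPrefix ω (k + 1)) := by
    refine Set.union_subset (cylinder_wordPrefix_antitone ω (by omega)) ?_
    rw [← wordPrefix_congr (k := k + 1) fun i hi => hυ i (by omega)]
    exact cylinder_wordPrefix_antitone υ (by omega)
  have hadd := measureReal_mono (μ := ν) hsub
  rw [measureReal_union hdisj (measurableSet_cylinder _)] at hadd
  have hmul : κ * (ν.real (cylinder A (wordPrefix ω (k + 1))) * Real.exp (-M - P - D)) ≤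
      κ * (ν.real (cylinder A (wordPrefix ω (k + 1))) * ν.real (cylinder A (wordPrefix τ 1))) := by
    gcongr
  rw [show k + 1 + n = k + n + 1 by ring]
  linarith

/-- Cylinder measures decay exponentially, uniformly in the word. -/
theorem exists_cylinder_exp_decay [IsProbabilityMeasure ν] (hl : 2 ≤ l) (hA : Primitive A)
    (hφ : HolderCont φ) (hGibbs : IsGibbs φ P ν) :
    ∃ θ E : ℝ, 0 < θ ∧ ∀ (ω : SigmaA l A) (k : ℕ),
      ν.real (cylinder A (wordPrefix ω k)) ≤ Real.exp (E - θ * k) := by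
  obtain ⟨n, δ, hn, hδ, h⟩ := exists_cylinder_contraction hl hA hφ hGibbs
  have hn' : (0 : ℝ) < n := by exact_mod_cast hn
  have hpow : ∀ (ω : SigmaA l A) (j : ℕ),
      ν.real (cylinder A (wordPrefix ω (j * n + 1))) ≤ Real.exp (-δ * j) := by
    intro ω j
    induction j with
    | zero => simp
    | succ j ih =>
      calc _ = ν.real (cylinder A (wordPrefix ω (j * n + 1 + n))) := by congr 3; ring
        _ ≤ (1 - δ) * ν.real (cylinder A (wordPrefix ω (j * n + 1))) := h ω _
        _ ≤ Real.exp (-δ) * Real.exp (-δ * j) := by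
            gcongr
            linarith [Real.add_one_le_exp (-δ)]
        _ = _ := by rw [← Real.exp_add]; push_cast; ring_nf
  refine ⟨δ / n, 2 * δ, by positivity, fun ω k => ?_⟩
  rcases Nat.eq_zero_or_pos k with rfl | hk
  · refine measureReal_le_one.trans (Real.one_le_exp ?_)
    simp only [Nat.cast_zero, mul_zero, sub_zero]
    positivity
  · obtain ⟨k, rfl⟩ := Nat.exists_eq_succ_of_ne_zero hk.ne'
    have hle : k / n * n + 1 ≤ k + 1 := Nat.succ_le_succ (Nat.div_mul_le_self k n)
    refine (measureReal_mono (cylinder_wordPrefix_antitone ω hle)).trans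
      ((hpow ω (k / n)).trans (Real.exp_le_exp.2 ?_))
    have hlt : (k : ℝ) + 1 ≤ n * ((k / n : ℕ) + 1) := by
      exact_mod_cast Nat.lt_mul_div_succ k hn
    have h1n : (1 : ℝ) ≤ n := by exact_mod_cast hn
    have : δ / n * ((k : ℝ) + 1) ≤ δ / n * (n * ((k / n : ℕ) + 1)) := by gcongr
    have e : δ / n * (n * (((k / n : ℕ) : ℝ) + 1)) = δ * ((k / n : ℕ) + 1) := by
      field_simp
    push_cast at this e ⊢
    linarith

end Gibbs

/-! ### The counting function as a sum over word lengths -/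

section Counting

variable {ν : Measure (SigmaA l A)}

theorem eq_wordPrefix_of_mem_cylinder {ω : SigmaA l A} {y : List (Fin l)}
    (hω : ω ∈ cylinder A y) : y = wordPrefix ω y.length := by
  refine List.ext_getElem (by simp [wordPrefix]) fun i h1 h2 => ?_
  simpa [wordPrefix] using (hω i h1).symm

theorem admissible_wordPrefix (ω : SigmaA l A) {k : ℕ} (hk : 0 < k) :
    Admissible A (wordPrefix ω k) := by
  refine ⟨?_, fun i h => ?_⟩
  · rw [← List.length_pos_iff]
    simpa [wordPrefix] using hk
  · simpa [wordPrefix] using ω.2 i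

theorem cylinder_wordPrefix_subset_iff {ω : SigmaA l A} {k : ℕ} {x : List (Fin l)}
    (hk : x.length ≤ k) : cylinder A (wordPrefix ω k) ⊆ cylinder A x ↔ ω ∈ cylinder A x := by
  refine ⟨fun h => h (mem_cylinder_wordPrefix_self ω k), fun h υ hυ i hi => ?_⟩
  rw [mem_cylinder_wordPrefix.1 hυ i (by omega)]
  exact h i hi

/-- The measure of the points of `[x]` whose cylinder of length `k` has measure exceeding `t`. -/
noncomputable def heavyMeasure (ν : Measure (SigmaA l A)) (x : List (Fin l)) (t : ℝ) (k : ℕ) : ℝ :=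
  ν.real {ω | ω ∈ cylinder A x ∧ t < ν.real (cylinder A (wordPrefix ω k))}

theorem heavyMeasure_nonneg (x : List (Fin l)) (t : ℝ) (k : ℕ) : 0 ≤ heavyMeasure ν x t k :=
  measureReal_nonneg

theorem heavyMeasure_le [IsProbabilityMeasure ν] (x : List (Fin l)) (t : ℝ) (k : ℕ) :
    heavyMeasure ν x t k ≤ ν.real (cylinder A x) :=
  measureReal_mono fun _ h => h.1

theorem heavyMeasure_antitone [IsProbabilityMeasure ν] (x : List (Fin l)) (t : ℝ) :
    Antitone (heavyMeasure ν x t) := fun _ _ hab => measureReal_mono fun ω h =>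
  ⟨h.1, h.2.trans_le (measureReal_mono (cylinder_wordPrefix_antitone ω hab))⟩

theorem xiSum_eq_sum [IsProbabilityMeasure ν] (x : List (Fin l)) {t : ℝ} (ht : 0 ≤ t) {N : ℕ}
    (hN : ∀ (ω : SigmaA l A) (k : ℕ), N ≤ k → ν.real (cylinder A (wordPrefix ω k)) ≤ t) :
    xiSum A ν x t = ∑ k ∈ Finset.range N, ν.real {ω | Admissible A (wordPrefix ω k) ∧
      cylinder A (wordPrefix ω k) ⊆ cylinder A x ∧
        t < ν.real (cylinder A (wordPrefix ω k))} := by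
  classical
  set S : Set (List (Fin l)) :=
    {y | Admissible A y ∧ cylinder A y ⊆ cylinder A x ∧ t < (ν (cylinder A y)).toReal} with hS
  have hlen : ∀ y ∈ S, y.length < N := by
    intro y hy
    by_contra! hle
    rcases (cylinder A y).eq_empty_or_nonempty with he | ⟨ω, hω⟩
    · have := hy.2.2
      rw [he, measure_empty, ENNReal.toReal_zero] at this
      linarith
    · have h1 := hN ω _ hle
      rw [← eq_wordPrefix_of_mem_cylinder hω] at h1
      exact absurd hy.2.2 (not_lt.2 h1)
  have hfin : (Function.support (S.indicator fun y => (ν (cylinder A y)).toReal)).Finite :=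
    (List.finite_length_lt (Fin l) N).subset fun y hy => hlen y (Set.mem_of_indicator_ne_zero hy)
  have hsummable : Summable (S.indicator fun y => (ν (cylinder A y)).toReal) :=
    summable_of_hasFiniteSupport hfin
  have hlevel : ∀ k, ∑ v : Fin k → Fin l,
      S.indicator (fun y => (ν (cylinder A y)).toReal) (List.ofFn v) =
        ν.real {ω | wordPrefix ω k ∈ S} := by
    intro k
    have := measure_setOf_restrict_fin_mem ν k (Finset.univ.filter fun v => List.ofFn v ∈ S)
    rw [show {ω : SigmaA l A | wordPrefix ω k ∈ S} = {ω | (fun i : Fin k => ω.1 i) ∈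
      Finset.univ.filter fun v : Fin k → Fin l => List.ofFn v ∈ S} by ext; simp [wordPrefix],
      measureReal_def, ← this, ENNReal.toReal_sum fun _ _ => measure_ne_top _ _, Finset.sum_filter]
    exact Finset.sum_congr rfl fun v _ => Set.indicator_apply _ _ _
  have hsigma := Summable.tsum_sigma ((List.equivSigmaTuple.symm.summable_iff).2 hsummable)
  simp only [tsum_fintype, Function.comp_apply] at hsigma
  rw [xiSum, ← hS, ← List.equivSigmaTuple.symm.tsum_eq, hsigma]
  have hrepr : ∀ k, ∑ v : Fin k → Fin l, S.indicator (fun y => (ν (cylinder A y)).toReal)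
      (List.equivSigmaTuple.symm ⟨k, v⟩) = ν.real {ω | wordPrefix ω k ∈ S} := hlevel
  rw [tsum_congr hrepr, tsum_eq_sum (s := Finset.range N)]
  · rfl
  · intro k hk
    have : {ω : SigmaA l A | wordPrefix ω k ∈ S} = ∅ :=
      Set.eq_empty_of_forall_notMem fun ω hω => hk (by
        simpa [wordPrefix] using hlen _ hω)
    rw [this, measureReal_empty]

theorem xiSum_le [IsProbabilityMeasure ν] (x : List (Fin l)) {t : ℝ} (ht : 0 ≤ t) {N : ℕ}
    (hN : ∀ (ω : SigmaA l A) (k : ℕ), N ≤ k → ν.real (cylinder A (wordPrefix ω k)) ≤ t) (b : ℕ) :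
    xiSum A ν x t ≤ b * ν.real (cylinder A x) + N * heavyMeasure ν x t b := by
  rw [xiSum_eq_sum x ht hN]
  have hterm : ∀ k, ν.real {ω | Admissible A (wordPrefix ω k) ∧
      cylinder A (wordPrefix ω k) ⊆ cylinder A x ∧
        t < ν.real (cylinder A (wordPrefix ω k))} ≤ heavyMeasure ν x t k := fun k =>
    measureReal_mono fun ω h => ⟨h.2.1 (mem_cylinder_wordPrefix_self ω k), h.2.2⟩
  calc _ ≤ ∑ k ∈ Finset.range N, heavyMeasure ν x t k := Finset.sum_le_sum fun k _ => hterm k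
    _ ≤ ∑ k ∈ Finset.range (b + N), heavyMeasure ν x t k :=
        Finset.sum_le_sum_of_subset_of_nonneg (Finset.range_mono (by omega))
          fun k _ _ => heavyMeasure_nonneg x t k
    _ = ∑ k ∈ Finset.range b, heavyMeasure ν x t k +
          ∑ k ∈ Finset.range N, heavyMeasure ν x t (b + k) := Finset.sum_range_add _ _ _
    _ ≤ ∑ k ∈ Finset.range b, ν.real (cylinder A x) +
          ∑ k ∈ Finset.range N, heavyMeasure ν x t b :=
        add_le_add (Finset.sum_le_sum fun k _ => heavyMeasure_le x t k)
          (Finset.sum_le_sum fun k _ => heavyMeasure_antitone x t (by omega))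
    _ = _ := by simp

theorem le_xiSum [IsProbabilityMeasure ν] (x : List (Fin l)) {t : ℝ} (ht : 0 ≤ t) {N : ℕ}
    (hN : ∀ (ω : SigmaA l A) (k : ℕ), N ≤ k → ν.real (cylinder A (wordPrefix ω k)) ≤ t) (a : ℕ) :
    ((a : ℝ) - (x.length + 1)) * heavyMeasure ν x t a ≤ xiSum A ν x t := by
  have hN' : ∀ (ω : SigmaA l A) (k : ℕ), a + N ≤ k → ν.real (cylinder A (wordPrefix ω k)) ≤ t :=
    fun ω k hk => hN ω k (by omega)
  rw [xiSum_eq_sum x ht hN']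
  calc _ ≤ ((a - (x.length + 1) : ℕ) : ℝ) * heavyMeasure ν x t a := by
        refine mul_le_mul_of_nonneg_right ?_ (heavyMeasure_nonneg x t a)
        rw [sub_le_iff_le_add]
        exact_mod_cast (by omega : a ≤ a - (x.length + 1) + (x.length + 1))
    _ = ∑ k ∈ Finset.Ico (x.length + 1) a, heavyMeasure ν x t a := by simp
    _ ≤ ∑ k ∈ Finset.Ico (x.length + 1) a, ν.real {ω | Admissible A (wordPrefix ω k) ∧
      cylinder A (wordPrefix ω k) ⊆ cylinder A x ∧
        t < ν.real (cylinder A (wordPrefix ω k))} := by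
        refine Finset.sum_le_sum fun k hk => ?_
        rw [Finset.mem_Ico] at hk
        refine (heavyMeasure_antitone x t hk.2.le).trans (measureReal_mono fun ω h => ?_)
        exact ⟨admissible_wordPrefix ω (by omega),
          (cylinder_wordPrefix_subset_iff (by omega)).2 h.1, h.2⟩
    _ ≤ _ := by
        refine Finset.sum_le_sum_of_subset_of_nonneg (fun k hk => ?_)
          fun k _ _ => measureReal_nonneg
        rw [Finset.mem_Ico] at hk
        exact Finset.mem_range.2 (by omega)

end Counting

/-! ### Asymptotics -/

section Asymptotics

variable {φ : SigmaA l A → ℝ} {P : ℝ} {ν : Measure (SigmaA l A)}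

theorem memLp_two_potential [IsProbabilityMeasure ν] (hφ : HolderCont φ) : MemLp φ 2 ν := by
  obtain ⟨M, -, hM⟩ := hφ.exists_bound
  exact MemLp.of_bound hφ.continuous.measurable.aestronglyMeasurable M
    (Eventually.of_forall fun ω => hM ω)

theorem entropy_pos [IsProbabilityMeasure ν] (hl : 2 ≤ l) (hA : Primitive A)
    (hφ : HolderCont φ) (hGibbs : IsGibbs φ P ν)
    (hmp : MeasurePreserving (shift : SigmaA l A → SigmaA l A) ν ν) :
    0 < P - ∫ ω, φ ω ∂ν := by
  obtain ⟨D, hD, hG⟩ := hGibbs.exists_bounds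
  obtain ⟨θ, E, hθ, hdecay⟩ := exists_cylinder_exp_decay hl hA hφ hGibbs
  have hint : Integrable φ ν := (memLp_two_potential hφ).integrable (by norm_num)
  have hbound : ∀ k : ℕ, k ≠ 0 → ∫ ω, φ ω ∂ν ≤ P - θ + (D + E) / k := by
    intro k hk
    have hk' : (0 : ℝ) < k := by positivity
    rw [← integral_birkhoffAverage hmp hint hk]
    have hpt : ∀ ω, birkhoffAverage ℝ shift φ k ω ≤ P - θ + (D + E) / k := by
      intro ω
      have h1 := Real.exp_le_exp.1 ((hG ω k).1.trans (hdecay ω k))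
      have h2 : birkhoffAverage ℝ shift φ k ω = birkhoff φ k ω / k := by
        simp only [birkhoffAverage, smul_eq_mul]
        rw [inv_mul_eq_div]
        rfl
      rw [h2, div_le_iff₀ hk', add_mul, div_mul_cancel₀ _ hk'.ne']
      linarith
    have hi : Integrable (birkhoffAverage ℝ shift φ k) ν := by
      refine Integrable.const_mul (integrable_finsetSum _ fun n _ => ?_) _
      exact (hmp.iterate n).integrable_comp_of_integrable hint
    simpa using integral_mono hi (integrable_const (P - θ + (D + E) / k)) hpt
  have hlim : Tendsto (fun k : ℕ => P - θ + (D + E) / k) atTop (nhds (P - θ + 0)) :=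
    tendsto_const_nhds.add (tendsto_const_div_atTop_nhds_zero_nat _)
  have := ge_of_tendsto hlim ((eventually_ne_atTop 0).mono hbound)
  linarith

/-- The measure of the points whose `k`-th Birkhoff average of `φ` is at least `ε` off the mean. -/
noncomputable def deviation (ν : Measure (SigmaA l A)) (φ : SigmaA l A → ℝ) (ε : ℝ) (k : ℕ) : ℝ :=
  ν.real {ω | ε ≤ |birkhoffAverage ℝ shift φ k ω - ∫ ω, φ ω ∂ν|}

theorem tendsto_deviation [IsProbabilityMeasure ν] (hφ : HolderCont φ)
    (herg : Ergodic (shift : SigmaA l A → SigmaA l A) ν) {ε : ℝ} (hε : 0 < ε) :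
    Tendsto (deviation ν φ ε) atTop (nhds 0) := by
  have := tendstoInMeasure_iff_norm.1
    (herg.tendstoInMeasure_birkhoffAverage (memLp_two_potential hφ)) ε hε
  exact (ENNReal.tendsto_toReal ENNReal.zero_ne_top).comp this

theorem birkhoff_mem_Ioo_of_notMem {ε m : ℝ} {k : ℕ} (hk : k ≠ 0) {ω : SigmaA l A}
    (h : ¬ ε ≤ |birkhoffAverage ℝ shift φ k ω - m|) :
    k * (m - ε) < birkhoff φ k ω ∧ birkhoff φ k ω < k * (m + ε) := by
  have hk' : (0 : ℝ) < k := by positivity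
  have h2 : birkhoff φ k ω = k * birkhoffAverage ℝ shift φ k ω := by
    simp only [birkhoffAverage, smul_eq_mul]
    rw [mul_inv_cancel_left₀ hk'.ne']
    rfl
  rw [not_le, abs_lt] at h
  rw [h2]
  constructor <;> gcongr <;> linarith

theorem eventually_sub_deviation_le [IsProbabilityMeasure ν] (hGibbs : IsGibbs φ P ν)
    (x : List (Fin l)) {u ε : ℝ} (hu : 0 < u) (hε : 0 ≤ P - ∫ ω, φ ω ∂ν + ε)
    (huε : u * (P - ∫ ω, φ ω ∂ν + ε) < 1) :
    ∀ᶠ r : ℝ in atTop, ν.real (cylinder A x) - deviation ν φ ε ⌊u * r⌋₊ ≤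
      heavyMeasure ν x (Real.exp (-r)) ⌊u * r⌋₊ := by
  obtain ⟨D, hD, hG⟩ := hGibbs.exists_bounds
  have hlin : Tendsto (fun r : ℝ => r * (1 - u * (P - ∫ ω, φ ω ∂ν + ε))) atTop atTop :=
    tendsto_id.atTop_mul_const (by linarith)
  have hfl : Tendsto (fun r : ℝ => ⌊u * r⌋₊) atTop atTop :=
    tendsto_nat_floor_atTop.comp (tendsto_id.const_mul_atTop hu)
  filter_upwards [hlin.eventually_ge_atTop D, hfl.eventually_ne_atTop 0, eventually_ge_atTop 0]
    with r hr hk hr0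
  have hfloor : (⌊u * r⌋₊ : ℝ) ≤ u * r := Nat.floor_le (by positivity)
  set k := ⌊u * r⌋₊
  rw [sub_le_iff_le_add]
  refine (measureReal_mono (fun ω hω => ?_)).trans (measureReal_union_le _ _)
  by_cases hbad : ε ≤ |birkhoffAverage ℝ shift φ k ω - ∫ ω, φ ω ∂ν|
  · exact Or.inr hbad
  · refine Or.inl ⟨hω, lt_of_lt_of_le (Real.exp_lt_exp.2 ?_) (hG ω k).1⟩
    have h1 := (birkhoff_mem_Ioo_of_notMem hk hbad).1
    have h2 := mul_le_mul_of_nonneg_right hfloor hε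
    nlinarith

theorem eventually_heavyMeasure_le_deviation [IsProbabilityMeasure ν] (hGibbs : IsGibbs φ P ν)
    (x : List (Fin l)) {u ε : ℝ} (hu : 0 < u) (hε : 0 ≤ P - ∫ ω, φ ω ∂ν - ε)
    (huε : 1 < u * (P - ∫ ω, φ ω ∂ν - ε)) :
    ∀ᶠ r : ℝ in atTop,
      heavyMeasure ν x (Real.exp (-r)) ⌈u * r⌉₊ ≤ deviation ν φ ε ⌈u * r⌉₊ := by
  obtain ⟨D, hD, hG⟩ := hGibbs.exists_bounds
  have hlin : Tendsto (fun r : ℝ => r * (u * (P - ∫ ω, φ ω ∂ν - ε) - 1)) atTop atTop :=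
    tendsto_id.atTop_mul_const (by linarith)
  have hce : Tendsto (fun r : ℝ => ⌈u * r⌉₊) atTop atTop :=
    tendsto_nat_ceil_atTop.comp (tendsto_id.const_mul_atTop hu)
  filter_upwards [hlin.eventually_ge_atTop D, hce.eventually_ne_atTop 0] with r hr hk
  have hceil : u * r ≤ (⌈u * r⌉₊ : ℝ) := Nat.le_ceil _
  set k := ⌈u * r⌉₊
  refine measureReal_mono fun ω hω => ?_
  by_contra hbad
  have h1 := (birkhoff_mem_Ioo_of_notMem hk hbad).2
  have h2 := mul_le_mul_of_nonneg_right hceil hε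
  have h3 := Real.exp_lt_exp.1 (hω.2.trans_le (hG ω k).2)
  nlinarith

theorem exists_length_bound [IsProbabilityMeasure ν] (hl : 2 ≤ l) (hA : Primitive A)
    (hφ : HolderCont φ) (hGibbs : IsGibbs φ P ν) :
    ∃ K : ℝ, ∀ᶠ r : ℝ in atTop, ∃ N : ℕ, (N : ℝ) ≤ K * r ∧
      ∀ (ω : SigmaA l A) (k : ℕ), N ≤ k →
        ν.real (cylinder A (wordPrefix ω k)) ≤ Real.exp (-r) := by
  obtain ⟨θ, E, hθ, hdecay⟩ := exists_cylinder_exp_decay hl hA hφ hGibbs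
  refine ⟨(1 + |E|) / θ + 1, ?_⟩
  filter_upwards [eventually_ge_atTop 1] with r hr
  have hE := abs_nonneg E
  refine ⟨⌈(r + |E|) / θ⌉₊, ?_, fun ω k hk => (hdecay ω k).trans (Real.exp_le_exp.2 ?_)⟩
  · refine (Nat.ceil_lt_add_one (by positivity)).le.trans ?_
    have : (r + |E|) / θ ≤ (1 + |E|) / θ * r := by
      rw [div_mul_eq_mul_div]
      gcongr
      nlinarith
    linarith
  · have h1 : (r + |E|) / θ ≤ k := (Nat.le_ceil _).trans (by exact_mod_cast hk)
    rw [div_le_iff₀ hθ] at h1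
    linarith [le_abs_self E]

theorem tendsto_xiSum_div [IsProbabilityMeasure ν] (hl : 2 ≤ l) (hA : Primitive A)
    (hφ : HolderCont φ) (hGibbs : IsGibbs φ P ν)
    (herg : Ergodic (shift : SigmaA l A → SigmaA l A) ν) (x : List (Fin l)) :
    Tendsto (fun r : ℝ => xiSum A ν x (Real.exp (-r)) / r) atTop
      (nhds (ν.real (cylinder A x) / (P - ∫ ω, φ ω ∂ν))) := by
  have hpos := entropy_pos hl hA hφ hGibbs herg.toMeasurePreserving
  obtain ⟨K, hK⟩ := exists_length_bound hl hA hφ hGibbs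
  set h := P - ∫ ω, φ ω ∂ν with hh
  set m := ν.real (cylinder A x) with hm
  have hcont : Tendsto (fun u : ℝ => u * m) (nhds h⁻¹) (nhds (m / h)) := by
    rw [div_eq_inv_mul]
    exact tendsto_id.mul_const m
  have hinv : 0 < h⁻¹ := inv_pos.2 hpos
  refine tendsto_order.2 ⟨fun b hb => ?_, fun b hb => ?_⟩
  · obtain ⟨u, ⟨hub, hu0⟩, huh⟩ := (((hcont.eventually_const_lt hb).and
      (lt_mem_nhds hinv)).filter_mono nhdsWithin_le_nhds |>.and
        (self_mem_nhdsWithin (s := Set.Iio h⁻¹))).exists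
    have huh1 : u * h < 1 := by
      calc u * h < h⁻¹ * h := mul_lt_mul_of_pos_right huh hpos
        _ = 1 := inv_mul_cancel₀ hpos.ne'
    have huinv : u * u⁻¹ = 1 := mul_inv_cancel₀ hu0.ne'
    have hlt : h < u⁻¹ := (lt_inv_comm₀ hu0 hpos).1 huh
    have hε : 0 < (u⁻¹ - h) / 2 := by linarith
    have hlow := eventually_sub_deviation_le hGibbs x hu0 (by linarith)
      (by rw [← hh]; linarith : u * (P - ∫ ω, φ ω ∂ν + (u⁻¹ - h) / 2) < 1)
    have hfl : Tendsto (fun r : ℝ => ⌊u * r⌋₊) atTop atTop :=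
      tendsto_nat_floor_atTop.comp (tendsto_id.const_mul_atTop hu0)
    have hlim : Tendsto (fun r : ℝ => ((⌊u * r⌋₊ : ℝ) / r - (x.length + 1) / r) *
        (m - deviation ν φ ((u⁻¹ - h) / 2) ⌊u * r⌋₊)) atTop (nhds ((u - 0) * (m - 0))) :=
      ((tendsto_nat_floor_mul_div_atTop hu0.le).sub (tendsto_const_nhds.div_atTop tendsto_id)).mul
        (tendsto_const_nhds.sub ((tendsto_deviation hφ herg hε).comp hfl))
    rw [sub_zero, sub_zero] at hlim
    filter_upwards [hlim.eventually_const_lt hub, hlow, hK, eventually_gt_atTop 0,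
      hfl.eventually_ge_atTop (x.length + 1)] with r h1 h2 ⟨N, _, hN⟩ hr hfloor
    refine h1.trans_le ?_
    rw [← sub_div, div_mul_eq_mul_div]
    refine div_le_div_of_nonneg_right ?_ hr.le
    refine le_trans (mul_le_mul_of_nonneg_left h2 ?_) (le_xiSum x (Real.exp_pos _).le hN _)
    rw [sub_nonneg]
    exact_mod_cast hfloor
  · obtain ⟨u, hub, huh⟩ := (((hcont.eventually_lt_const hb).filter_mono nhdsWithin_le_nhds).and
        (self_mem_nhdsWithin (s := Set.Ioi h⁻¹))).exists
    have hu0 : 0 < u := hinv.trans huh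
    have huh1 : 1 < u * h := by
      calc 1 = h⁻¹ * h := (inv_mul_cancel₀ hpos.ne').symm
        _ < u * h := mul_lt_mul_of_pos_right huh hpos
    have huinv : u * u⁻¹ = 1 := mul_inv_cancel₀ hu0.ne'
    have hlt : u⁻¹ < h := (inv_lt_comm₀ hpos hu0).1 huh
    have hε : 0 < (h - u⁻¹) / 2 := by linarith
    have huinv0 : 0 < u⁻¹ := inv_pos.2 hu0
    have hup := eventually_heavyMeasure_le_deviation hGibbs x hu0 (by linarith)
      (by rw [← hh]; linarith : 1 < u * (P - ∫ ω, φ ω ∂ν - (h - u⁻¹) / 2))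
    have hce : Tendsto (fun r : ℝ => ⌈u * r⌉₊) atTop atTop :=
      tendsto_nat_ceil_atTop.comp (tendsto_id.const_mul_atTop hu0)
    have hlim : Tendsto (fun r : ℝ => (⌈u * r⌉₊ : ℝ) / r * m +
        K * deviation ν φ ((h - u⁻¹) / 2) ⌈u * r⌉₊) atTop (nhds (u * m + K * 0)) :=
      ((tendsto_nat_ceil_mul_div_atTop hu0.le).mul_const m).add
        (((tendsto_deviation hφ herg hε).comp hce).const_mul K)
    rw [mul_zero, add_zero] at hlim
    filter_upwards [hlim.eventually_lt_const hub, hup, hK, eventually_gt_atTop 0]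
      with r h1 h2 ⟨N, hNK, hN⟩ hr
    refine lt_of_le_of_lt ?_ h1
    rw [div_le_iff₀ hr, add_mul, mul_right_comm, div_mul_cancel₀ _ hr.ne', mul_right_comm K]
    refine (xiSum_le x (Real.exp_pos _).le hN _).trans (add_le_add le_rfl ?_)
    exact mul_le_mul hNK h2 (heavyMeasure_nonneg _ _ _) (N.cast_nonneg.trans hNK)

end Asymptotics

end Symbolic

/-- For a `σ`-invariant Gibbs measure `ν` with pressure `P`,
`h := P − ∫ φ dν > 0` and for every `x ∈ Σ_A^* ∪ {∅}` one has
`Ξ_x(e^{−r}) ∼ ν([x]) r / h` as `r → ∞`. -/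
theorem xi_asymptotic
    (hl : 2 ≤ l) (A : Matrix (Fin l) (Fin l) ℕ) (hA : Primitive A)
    (φ : SigmaA l A → ℝ) (hφ : HolderCont φ) (P : ℝ)
    (ν : Measure (SigmaA l A)) [IsProbabilityMeasure ν] (hGibbs : IsGibbs φ P ν)
    (hinv : ∀ B : Set (SigmaA l A), MeasurableSet B → ν (shift ⁻¹' B) = ν B) :
    0 < P - ∫ ω, φ ω ∂ν ∧
      ∀ x : List (Fin l), x = [] ∨ Admissible A x →
        Tendsto (fun r : ℝ => xiSum A ν x (Real.exp (-r)) / r) atTop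
          (nhds ((ν (cylinder A x)).toReal / (P - ∫ ω, φ ω ∂ν))) := by
  have herg := ergodic_shift hA hφ hGibbs hinv
  exact ⟨entropy_pos hl hA hφ hGibbs herg.toMeasurePreserving,
    fun x _ => tendsto_xiSum_div hl hA hφ hGibbs herg x⟩

end SFT
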